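/- First integral relation: let σ ∈ S₀(ρ) and f ∈ Λ₀ satisfy f(r_j) = σ(r_j) for all j ∈ {1,…,n}, and suppose that either lim_{r→0⁺}(f(r) − σ(r)) = 0 or σ is non-singular. Then ‖f‖₀² = ‖σ‖₀² + ‖f − σ‖₀². -/

import Mathlib

open MeasureTheory Set Filter

noncomputable section

/-- The radial Beppo Levi energy space `Λ₀`: functions `f : (0,∞) → ℂ` of class `C¹`
whose derivative `f′` is locally absolutely continuous on compact subintervals of `(0,∞)`
(encoded by the fundamental theorem of calculus with an integrable density `f″`),
and whose radial Beppo Levi energy `∫₀^∞ ( r·|f″(r)|² + (1/r)·|f′(r)|² ) dr` is finite. -/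
structure Lambda0 where
  f : ℝ → ℂ
  f' : ℝ → ℂ
  f'' : ℝ → ℂ
  hasDeriv : ∀ r ∈ Set.Ioi (0:ℝ), HasDerivAt f (f' r) r
  contDeriv : ContinuousOn f' (Set.Ioi 0)
  locAC : ∀ a b : ℝ, 0 < a → a ≤ b →
    MeasureTheory.IntegrableOn f'' (Set.Icc a b) ∧
      ∀ x ∈ Set.Icc a b, f' x = f' a + ∫ t in a..x, f'' t
  energyFin : MeasureTheory.IntegrableOn
    (fun r : ℝ => r * ‖f'' r‖ ^ 2 + (1 / r) * ‖f' r‖ ^ 2) (Set.Ioi 0)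

/-- The squared radial Beppo Levi energy `‖·‖₀²` of a function with first derivative `g'`
and second derivative `g''`. -/
def energySq (g' g'' : ℝ → ℂ) : ℝ :=
  ∫ r in Set.Ioi (0:ℝ), (r * ‖g'' r‖ ^ 2 + (1 / r) * ‖g' r‖ ^ 2)

/-- The seminorm `‖f‖₀`. -/
def Lambda0.seminorm0 (F : Lambda0) : ℝ :=
  Real.sqrt (energySq F.f' F.f'')

/-- The semi-inner product `⟨f,g⟩₀`. -/
def innerBL (F G : Lambda0) : ℂ :=
  ∫ r in Set.Ioi (0:ℝ),
    ((r : ℂ) * F.f'' r * (starRingEnd ℂ) (G.f'' r) +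
      (1 / (r : ℂ)) * F.f' r * (starRingEnd ℂ) (G.f' r))

/-- A Beppo Levi `L₀`-spline on the positive knots `r 1 < r 2 < … < r n`:
piecewise of the form `a·x² + b·x²·ln x + c + d·ln x` between consecutive knots,
of the form `a·x² + b·x²·ln x + c` on `(0, r 1)`, of the form `c + d·ln x` on `(r n, ∞)`,
`C²` throughout `(0,∞)`, and continuously extended at `0`. -/
structure IsBLSpline (n : ℕ) (r : ℕ → ℝ) (η : ℝ → ℂ) : Prop where
  pieces : ∀ j : ℕ, 1 ≤ j → j + 1 ≤ n → ∃ a b c d : ℂ,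
    ∀ x ∈ Set.Ioo (r j) (r (j + 1)),
      η x = a * (x : ℂ) ^ 2 + b * (x : ℂ) ^ 2 * (Real.log x : ℂ) + c + d * (Real.log x : ℂ)
  left : ∃ a b c : ℂ, ∀ x ∈ Set.Ioo (0 : ℝ) (r 1),
      η x = a * (x : ℂ) ^ 2 + b * (x : ℂ) ^ 2 * (Real.log x : ℂ) + c
  right : ∃ c d : ℂ, ∀ x ∈ Set.Ioi (r n), η x = c + d * (Real.log x : ℂ)
  smooth : ContDiffOn ℝ 2 η (Set.Ioi 0)
  cont0 : ContinuousWithinAt η (Set.Ici 0) 0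

/-- A Beppo Levi `L₀`-spline is non-singular if on `(0, r₁)` it has the form `a·x² + c`. -/
def NonSingularBLS (r1 : ℝ) (η : ℝ → ℂ) : Prop :=
  ∃ a c : ℂ, ∀ x ∈ Set.Ioo (0 : ℝ) r1, η x = a * (x : ℂ) ^ 2 + c

/-- Rabut's kernel `K`. -/
def Kfun (r t : ℝ) : ℝ :=
  if r ≤ t then 0 else (1 / 4) * (t ^ 2 - r ^ 2 + (r ^ 2 + t ^ 2) * Real.log (r / t))

/-- The limiting kernel `H_{0,∞}` (with left endpoint knot `r1`). -/
def Hfun (r1 r t : ℝ) : ℝ :=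
  Kfun r t - Kfun r r1 - Kfun r1 t + (1 / 4) * (r ^ 2 - r1 ^ 2) * Real.log (t / r1)

/-- The basis function `φ₀`. -/
def phi0 (r : ℝ) : ℝ :=
  if r ≤ 1 then r ^ 2 - r ^ 2 * Real.log r else 1 + Real.log r

/-- Johnson's compactly supported profile `η₂`. -/
def eta2 (x : ℝ) : ℂ :=
  (((4 / 3 : ℝ) * (Real.log 2 - phi0 x + phi0 (x / 2)) : ℝ) : ℂ)

/-- The non-singular compactly supported profile `β`. -/
def betaFn (x : ℝ) : ℂ :=
  (((1 / 5 : ℝ) * (27 * Real.log 3 - 32 * Real.log 2 + 5 * phi0 x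
      - 32 * phi0 (x / 2) + 27 * phi0 (x / 3)) : ℝ) : ℂ)

/-- `Ker L₀ = span{r², r² ln r, 1, ln r}`, as functions on `(0,∞)`. -/
def KerL0 : Set (ℝ → ℂ) :=
  {η | ∃ a b c d : ℂ, ∀ x : ℝ, 0 < x →
    η x = a * (x : ℂ) ^ 2 + b * (x : ℂ) ^ 2 * (Real.log x : ℂ) + c + d * (Real.log x : ℂ)}

/-- `α(h) = inf_{η ∈ Ker L₀} sup_{t ∈ [0,1]} |t^μ − η(1+th)|`. -/
def alphaFn (μ h : ℝ) : ℝ :=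
  sInf {v : ℝ | ∃ η ∈ KerL0,
    v = sSup ((fun t : ℝ => ‖((t ^ μ : ℝ) : ℂ) - η (1 + t * h)‖) '' Set.Icc (0 : ℝ) 1)}

/-!
By polarization the relation is the orthogonality `⟨g, σ⟩₀ = 0` for `g = f − σ`, which vanishes at
the knots. On a piece where `σ` is a kernel function with `r² ln r`-coefficient `b`, one has
`(r σ″)′ = σ′ / r + 4 b`, so the integrand of `⟨g, σ⟩₀` is the derivative of
`g′ · conj (r σ″) − 4 conj b · g`. The terms in `g` vanish at the knots, and since `σ` is `C²` the
boundary terms `g′ · conj (r σ″)` telescope over the pieces. What remains are the limits at `0` and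
`∞`: there `r σ″ → 0`, while finite energy and the divergence of `∫ dr / r` give `|g′| ≤ 1` at
points arbitrarily close to either end. At `0` the remaining term `4 conj b · g` tends to `0`
because `g → 0` or, if `σ` is non-singular, because `b = 0`.
-/

open scoped Topology ComplexConjugate

section AbsolutelyContinuous

variable {E : Type*} [NormedAddCommGroup E] {a b : ℝ}

theorem absolutelyContinuousOnInterval_of_dist_le {X Y : Type*} [PseudoMetricSpace X]
    [PseudoMetricSpace Y] {f : ℝ → X} {g : ℝ → Y} (hg : AbsolutelyContinuousOnInterval g a b)
    (hfg : ∀ x ∈ uIcc a b, ∀ y ∈ uIcc a b, dist (f x) (f y) ≤ dist (g x) (g y)) :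
    AbsolutelyContinuousOnInterval f a b := by
  rw [absolutelyContinuousOnInterval_iff] at hg ⊢
  intro ε hε
  obtain ⟨δ, hδ, hgδ⟩ := hg ε hε
  refine ⟨δ, hδ, fun I hI hIδ => lt_of_le_of_lt ?_ (hgδ I hI hIδ)⟩
  exact Finset.sum_le_sum fun i hi => hfg _ (hI.1 i hi).1 _ (hI.1 i hi).2

variable [NormedSpace ℝ E] {f f' : ℝ → E}

theorem absolutelyContinuousOnInterval_of_eq_add_integral
    (hint : IntervalIntegrable f' volume a b)
    (hf : ∀ x ∈ uIcc a b, f x = f a + ∫ t in a..x, f' t) :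
    AbsolutelyContinuousOnInterval f a b := by
  refine absolutelyContinuousOnInterval_of_dist_le
    (hint.norm.absolutelyContinuousOnInterval_intervalIntegral left_mem_uIcc) fun x hx y hy => ?_
  have hsub {z : ℝ} (hz : z ∈ uIcc a b) : IntervalIntegrable f' volume a z :=
    hint.mono_set (uIcc_subset_uIcc_left hz)
  rw [hf x hx, hf y hy, dist_add_left, dist_eq_norm, dist_eq_norm,
    intervalIntegral.integral_interval_sub_left (hsub hx) (hsub hy),
    intervalIntegral.integral_interval_sub_left (hsub hx).norm (hsub hy).norm]
  exact intervalIntegral.norm_integral_le_abs_integral_norm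

variable [CompleteSpace E]

theorem absolutelyContinuousOnInterval_of_hasDerivAt (hab : a ≤ b)
    (hcont : ContinuousOn f (Icc a b)) (hderiv : ∀ x ∈ Ioo a b, HasDerivAt f (f' x) x)
    (hint : IntervalIntegrable f' volume a b) : AbsolutelyContinuousOnInterval f a b := by
  refine absolutelyContinuousOnInterval_of_eq_add_integral hint fun x hx => ?_
  rw [uIcc_of_le hab] at hx
  rw [intervalIntegral.integral_eq_sub_of_hasDerivAt_of_le hx.1
    (hcont.mono (Icc_subset_Icc_right hx.2)) (fun y hy => hderiv y ⟨hy.1, hy.2.trans_le hx.2⟩)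
    (hint.mono_set (uIcc_subset_uIcc_left (by rwa [uIcc_of_le hab])))]
  abel

theorem ae_hasDerivAt_of_eq_add_integral (hab : a ≤ b) (hint : IntervalIntegrable f' volume a b)
    (hf : ∀ x ∈ Icc a b, f x = f a + ∫ t in a..x, f' t) :
    ∀ᵐ x, x ∈ Ioo a b → HasDerivAt f (f' x) x := by
  filter_upwards [hint.ae_hasDerivAt_integral] with x hderiv hx
  rw [uIcc_of_le hab] at hderiv
  refine ((hderiv (Ioo_subset_Icc_self hx) a (left_mem_Icc.2 hab)).const_add
    (f a)).congr_of_eventuallyEq ?_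
  filter_upwards [Icc_mem_nhds hx.1 hx.2] with y hy using hf y hy

theorem integral_eq_sub_of_absolutelyContinuousOnInterval (hab : a ≤ b)
    (hf : AbsolutelyContinuousOnInterval f a b) (hint : IntervalIntegrable f' volume a b)
    (hderiv : ∀ᵐ x, x ∈ Ioo a b → HasDerivAt f (f' x) x) :
    ∫ x in a..b, f' x = f b - f a := by
  set P : ℝ → E := fun x => ∫ t in a..x, f' t
  have hP : AbsolutelyContinuousOnInterval P a b :=
    absolutelyContinuousOnInterval_of_eq_add_integral hint fun x _ => by simp [P]
  have hconst : ∀ᵐ x, x ∈ uIcc a b → HasDerivAt (f - P) 0 x := by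
    filter_upwards [hderiv, hint.ae_hasDerivAt_integral, volume.ae_ne a, volume.ae_ne b]
      with x hfx hPx hxa hxb hx
    have hx' : x ∈ Ioo a b := by
      rw [uIcc_of_le hab] at hx
      exact ⟨hx.1.lt_of_ne' hxa, hx.2.lt_of_ne hxb⟩
    simpa using (hfx hx').sub (hPx hx a left_mem_uIcc)
  obtain ⟨C, hC⟩ := (hf.sub hP).const_of_ae_hasDerivAt_zero hconst
  have hab' : f b - P b = f a - P a := (hC b right_mem_uIcc).trans (hC a left_mem_uIcc).symm
  have hPa : P a = 0 := intervalIntegral.integral_same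
  rw [hPa, sub_zero, sub_eq_iff_eq_add] at hab'
  rw [hab', add_sub_cancel_left]

end AbsolutelyContinuous

theorem eq_zero_of_tendsto_mul_of_frequently_norm_le {α R : Type*} [NonUnitalNormedRing R]
    {l : Filter α} {g k : α → R} {C : ℝ} {L : R} (hgk : Tendsto (fun x => g x * k x) l (𝓝 L))
    (hk : Tendsto k l (𝓝 0)) (hg : ∃ᶠ x in l, ‖g x‖ ≤ C) : L = 0 := by
  have : (l ⊓ 𝓟 {x | ‖g x‖ ≤ C}).NeBot := frequently_mem_iff_neBot.1 hg
  have hbdd : IsBoundedUnder (· ≤ ·) (l ⊓ 𝓟 {x | ‖g x‖ ≤ C}) (norm ∘ g) :=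
    isBoundedUnder_of_eventually_le (eventually_inf_principal.2 (Eventually.of_forall fun _ => id))
  exact tendsto_nhds_unique (hgk.mono_left inf_le_left)
    (isBoundedUnder_le_mul_tendsto_zero hbdd (hk.mono_left inf_le_left))

/-- The integrand `r·|g″(r)|² + (1/r)·|g′(r)|²` of the radial Beppo Levi energy. -/
def energyDensity (g' g'' : ℝ → ℂ) (x : ℝ) : ℝ := x * ‖g'' x‖ ^ 2 + (1 / x) * ‖g' x‖ ^ 2

theorem aestronglyMeasurable_energyDensity {g' g'' : ℝ → ℂ} {μ : Measure ℝ}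
    (hg' : AEStronglyMeasurable g' μ) (hg'' : AEStronglyMeasurable g'' μ) :
    AEStronglyMeasurable (energyDensity g' g'') μ :=
  (continuous_id.aestronglyMeasurable.mul (hg''.norm.pow 2)).add
    ((measurable_const.div measurable_id).aestronglyMeasurable.mul (hg'.norm.pow 2))

theorem energyDensity_sub_le (g' g'' h' h'' : ℝ → ℂ) {x : ℝ} (hx : 0 < x) :
    energyDensity (fun x => g' x - h' x) (fun x => g'' x - h'' x) x ≤
      2 * (energyDensity g' g'' x + energyDensity h' h'' x) := by
  have hsq (z w : ℂ) : ‖z - w‖ ^ 2 ≤ 2 * (‖z‖ ^ 2 + ‖w‖ ^ 2) := by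
    linarith [parallelogram_law_with_norm ℝ z w, sq_nonneg ‖z + w‖, sq ‖z‖, sq ‖w‖, sq ‖z + w‖,
      sq ‖z - w‖]
  calc energyDensity (fun x => g' x - h' x) (fun x => g'' x - h'' x) x
      ≤ x * (2 * (‖g'' x‖ ^ 2 + ‖h'' x‖ ^ 2)) + (1 / x) * (2 * (‖g' x‖ ^ 2 + ‖h' x‖ ^ 2)) := by
        unfold energyDensity
        gcongr <;> exact hsq _ _
    _ = 2 * (energyDensity g' g'' x + energyDensity h' h'' x) := by
        unfold energyDensity
        ring

namespace Lambda0

theorem intervalIntegrable_f'' (F : Lambda0) {u v : ℝ} (hu : 0 < u) (huv : u ≤ v) :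
    IntervalIntegrable F.f'' volume u v :=
  (intervalIntegrable_iff_integrableOn_Icc_of_le huv).2 (F.locAC u v hu huv).1

theorem aestronglyMeasurable_f'' (F : Lambda0) :
    AEStronglyMeasurable F.f'' (volume.restrict (Ioi 0)) := by
  refine LocallyIntegrableOn.aestronglyMeasurable fun x hx => ?_
  rw [mem_Ioi] at hx
  exact ⟨Icc (x / 2) (2 * x),
    mem_nhdsWithin_of_mem_nhds (Icc_mem_nhds (by linarith) (by linarith)),
    (F.locAC (x / 2) (2 * x) (by linarith) (by linarith)).1⟩

theorem aestronglyMeasurable_f' (F : Lambda0) :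
    AEStronglyMeasurable F.f' (volume.restrict (Ioi 0)) :=
  F.contDeriv.aestronglyMeasurable measurableSet_Ioi

instance : Sub Lambda0 where
  sub F G :=
    { f := fun x => F.f x - G.f x
      f' := fun x => F.f' x - G.f' x
      f'' := fun x => F.f'' x - G.f'' x
      hasDeriv := fun x hx => (F.hasDeriv x hx).sub (G.hasDeriv x hx)
      contDeriv := F.contDeriv.sub G.contDeriv
      locAC := fun a b ha hab => by
        refine ⟨(F.locAC a b ha hab).1.sub (G.locAC a b ha hab).1, fun x hx => ?_⟩
        rw [intervalIntegral.integral_sub (F.intervalIntegrable_f'' ha hx.1)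
          (G.intervalIntegrable_f'' ha hx.1), (F.locAC a b ha hab).2 x hx,
          (G.locAC a b ha hab).2 x hx]
        ring
      energyFin := by
        refine ((F.energyFin.add G.energyFin).const_mul 2).mono' ?_ ?_
        · exact aestronglyMeasurable_energyDensity
            (F.aestronglyMeasurable_f'.sub G.aestronglyMeasurable_f')
            (F.aestronglyMeasurable_f''.sub G.aestronglyMeasurable_f'')
        · filter_upwards [ae_restrict_mem measurableSet_Ioi] with x hx
          rw [mem_Ioi] at hx
          rw [Real.norm_of_nonneg (by positivity)]
          exact energyDensity_sub_le F.f' F.f'' G.f' G.f'' hx }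

end Lambda0

/-- The integrand of the semi-inner product `⟨f,g⟩₀`. -/
def innerDensity (F G : Lambda0) (x : ℝ) : ℂ :=
  (x : ℂ) * F.f'' x * conj (G.f'' x) + (1 / (x : ℂ)) * F.f' x * conj (G.f' x)

theorem norm_innerDensity_le (F G : Lambda0) {x : ℝ} (hx : 0 < x) :
    ‖innerDensity F G x‖ ≤ energyDensity F.f' F.f'' x + energyDensity G.f' G.f'' x := by
  have hmul (z w : ℂ) : ‖z‖ * ‖w‖ ≤ ‖z‖ ^ 2 + ‖w‖ ^ 2 := by
    nlinarith [two_mul_le_add_sq ‖z‖ ‖w‖, sq_nonneg ‖z‖, sq_nonneg ‖w‖]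
  calc ‖innerDensity F G x‖
      ≤ x * (‖F.f'' x‖ * ‖G.f'' x‖) + (1 / x) * (‖F.f' x‖ * ‖G.f' x‖) := by
        refine (norm_add_le _ _).trans_eq ?_
        simp only [norm_mul, norm_div, norm_one, RCLike.norm_conj, Complex.norm_real,
          Real.norm_of_nonneg hx.le, mul_assoc]
    _ ≤ x * (‖F.f'' x‖ ^ 2 + ‖G.f'' x‖ ^ 2) + (1 / x) * (‖F.f' x‖ ^ 2 + ‖G.f' x‖ ^ 2) := by
        gcongr <;> exact hmul _ _
    _ = energyDensity F.f' F.f'' x + energyDensity G.f' G.f'' x := by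
        unfold energyDensity
        ring

theorem integrableOn_innerDensity (F G : Lambda0) : IntegrableOn (innerDensity F G) (Ioi 0) := by
  refine (F.energyFin.add G.energyFin).mono' ?_ ?_
  · exact ((Complex.continuous_ofReal.aestronglyMeasurable.mul F.aestronglyMeasurable_f'').mul
      G.aestronglyMeasurable_f''.star).add
      (((measurable_const.div Complex.measurable_ofReal).aestronglyMeasurable.mul
        F.aestronglyMeasurable_f').mul G.aestronglyMeasurable_f'.star)
  · filter_upwards [ae_restrict_mem measurableSet_Ioi] with x hx
    exact norm_innerDensity_le F G hx

theorem energyDensity_eq_add (F G : Lambda0) (x : ℝ) :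
    energyDensity F.f' F.f'' x = energyDensity G.f' G.f'' x +
      energyDensity (F - G).f' (F - G).f'' x + 2 * (innerDensity (F - G) G x).re := by
  have hpol (z w : ℂ) : ‖z‖ ^ 2 = ‖w‖ ^ 2 + ‖z - w‖ ^ 2 + 2 * ((z - w) * conj w).re := by
    have hadd := Complex.normSq_add (z - w) w
    simp only [Complex.normSq_eq_norm_sq, sub_add_cancel] at hadd
    linarith
  have hre : (innerDensity (F - G) G x).re =
      x * ((F.f'' x - G.f'' x) * conj (G.f'' x)).re +
        (1 / x) * ((F.f' x - G.f' x) * conj (G.f' x)).re := by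
    rw [← Complex.re_ofReal_mul, ← Complex.re_ofReal_mul, ← Complex.add_re]
    push_cast
    simp only [← mul_assoc]
    rfl
  calc energyDensity F.f' F.f'' x
      = x * (‖G.f'' x‖ ^ 2 + ‖F.f'' x - G.f'' x‖ ^ 2 +
          2 * ((F.f'' x - G.f'' x) * conj (G.f'' x)).re) +
        (1 / x) * (‖G.f' x‖ ^ 2 + ‖F.f' x - G.f' x‖ ^ 2 +
          2 * ((F.f' x - G.f' x) * conj (G.f' x)).re) := by rw [← hpol, ← hpol]; rfl
    _ = energyDensity G.f' G.f'' x + energyDensity (fun x => F.f' x - G.f' x)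
          (fun x => F.f'' x - G.f'' x) x + 2 * (innerDensity (F - G) G x).re := by
        rw [hre, energyDensity, energyDensity]
        ring

theorem energySq_eq_add_energySq_sub_add_innerBL (F G : Lambda0) :
    energySq F.f' F.f'' = energySq G.f' G.f'' + energySq (F - G).f' (F - G).f'' +
      2 * (innerBL (F - G) G).re := by
  have hG : IntegrableOn (energyDensity G.f' G.f'') (Ioi 0) := G.energyFin
  have hFG : IntegrableOn (energyDensity (F - G).f' (F - G).f'') (Ioi 0) := (F - G).energyFin
  have hsum : IntegrableOn (fun x => energyDensity G.f' G.f'' x +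
    energyDensity (F - G).f' (F - G).f'' x) (Ioi 0) := hG.add hFG
  have hinner := integrableOn_innerDensity (F - G) G
  have hre : IntegrableOn (fun x => (innerDensity (F - G) G x).re) (Ioi 0) := hinner.re
  calc energySq F.f' F.f''
      = ∫ x in Ioi 0, (energyDensity G.f' G.f'' x + energyDensity (F - G).f' (F - G).f'' x +
          2 * (innerDensity (F - G) G x).re) :=
        integral_congr_ae (Eventually.of_forall (energyDensity_eq_add F G))
    _ = (∫ x in Ioi 0, energyDensity G.f' G.f'' x) +
          (∫ x in Ioi 0, energyDensity (F - G).f' (F - G).f'' x) +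
          2 * ∫ x in Ioi 0, (innerDensity (F - G) G x).re := by
        rw [integral_add hsum (hre.const_mul 2), integral_add hG hFG, integral_const_mul]
    _ = energySq G.f' G.f'' + energySq (F - G).f' (F - G).f'' + 2 * (innerBL (F - G) G).re := by
        rw [show ∫ x in Ioi 0, (innerDensity (F - G) G x).re = (innerBL (F - G) G).re from
          integral_re hinner]
        rfl

section Kernel

/-- The general element `a·x² + b·x²·ln x + c + d·ln x` of `Ker L₀`. -/
def kerL0Fun (a b c d : ℂ) (x : ℝ) : ℂ :=
  a * (x : ℂ) ^ 2 + b * (x : ℂ) ^ 2 * (Real.log x : ℂ) + c + d * (Real.log x : ℂ)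

/-- The radial moment `r·σ″(r)`, the factor of `g′` in the boundary term obtained on integrating
`⟨g,σ⟩₀` by parts. -/
def radialMoment (σ : ℝ → ℂ) (x : ℝ) : ℂ := (x : ℂ) * deriv (deriv σ) x

variable {a b c d : ℂ} {σ : ℝ → ℂ} {U : Set ℝ} {x : ℝ}

theorem hasDerivAt_ofReal_log (hx : x ≠ 0) :
    HasDerivAt (fun y : ℝ => (Real.log y : ℂ)) (1 / (x : ℂ)) x := by
  simpa using (Real.hasDerivAt_log hx).ofReal_comp

theorem hasDerivAt_kerL0Fun (hx : x ≠ 0) :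
    HasDerivAt (kerL0Fun a b c d)
      ((2 * a + b) * x + 2 * b * (x * (Real.log x : ℂ)) + d / x) x := by
  have hsq : HasDerivAt (fun y : ℝ => (y : ℂ) ^ 2) (2 * x) x := by
    simpa using (hasDerivAt_id x).ofReal_comp.fun_pow 2
  have hlog := hasDerivAt_ofReal_log hx
  refine ((((hsq.const_mul a).add ((hsq.const_mul b).mul hlog)).add_const c).add
    (hlog.const_mul d)).congr_deriv ?_
  have hx' : (x : ℂ) ≠ 0 := Complex.ofReal_ne_zero.2 hx
  field_simp
  ring

theorem hasDerivAt_mul_log_add_div (p q d : ℂ) (hx : x ≠ 0) :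
    HasDerivAt (fun y : ℝ => p * y + q * (y * (Real.log y : ℂ)) + d / y)
      (p + q * ((Real.log x : ℂ) + 1) - d / x ^ 2) x := by
  have hx' : (x : ℂ) ≠ 0 := Complex.ofReal_ne_zero.2 hx
  have hid : HasDerivAt (fun y : ℝ => (y : ℂ)) 1 x := by
    simpa using (hasDerivAt_id x).ofReal_comp
  refine (((hid.const_mul p).add ((hid.mul (hasDerivAt_ofReal_log hx)).const_mul q)).add
    ((hasDerivAt_const x d).div hid hx')).congr_deriv ?_
  field_simp
  ring

theorem continuousOn_radialMoment (hσ : ContDiffOn ℝ 2 σ (Ioi 0)) :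
    ContinuousOn (radialMoment σ) (Ioi 0) := by
  have hderiv : ContDiffOn ℝ 1 (deriv σ) (Ioi 0) :=
    hσ.deriv_of_isOpen isOpen_Ioi (by norm_num)
  exact Complex.continuous_ofReal.continuousOn.mul
    (hderiv.continuousOn_deriv_of_isOpen isOpen_Ioi le_rfl)

theorem deriv_eqOn_of_eqOn_kerL0Fun (hU : IsOpen U) (hU0 : U ⊆ Ioi 0)
    (hσ : EqOn σ (kerL0Fun a b c d) U) :
    EqOn (deriv σ) (fun x => (2 * a + b) * x + 2 * b * (x * (Real.log x : ℂ)) + d / x) U :=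
  fun _ hx => (hσ.deriv hU hx).trans (hasDerivAt_kerL0Fun (hU0 hx).ne').deriv

theorem radialMoment_eqOn_of_eqOn_kerL0Fun (hU : IsOpen U) (hU0 : U ⊆ Ioi 0)
    (hσ : EqOn σ (kerL0Fun a b c d) U) :
    EqOn (radialMoment σ)
      (fun x => (2 * a + 3 * b) * x + 2 * b * (x * (Real.log x : ℂ)) + -d / x) U := by
  intro x hx
  have hx0 : x ≠ 0 := (hU0 hx).ne'
  have hx' : (x : ℂ) ≠ 0 := Complex.ofReal_ne_zero.2 hx0
  have hderiv := (deriv_eqOn_of_eqOn_kerL0Fun hU hU0 hσ).deriv hU hx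
  rw [(hasDerivAt_mul_log_add_div _ _ _ hx0).deriv] at hderiv
  simp only [radialMoment, hderiv]
  field_simp
  ring

theorem hasDerivAt_radialMoment_of_eqOn_kerL0Fun (hU : IsOpen U) (hU0 : U ⊆ Ioi 0)
    (hσ : EqOn σ (kerL0Fun a b c d) U) (hx : x ∈ U) :
    HasDerivAt (radialMoment σ) (deriv σ x / x + 4 * b) x := by
  have hx0 : x ≠ 0 := (hU0 hx).ne'
  have hx' : (x : ℂ) ≠ 0 := Complex.ofReal_ne_zero.2 hx0
  refine ((hasDerivAt_mul_log_add_div _ _ _ hx0).congr_of_eventuallyEq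
    ((radialMoment_eqOn_of_eqOn_kerL0Fun hU hU0 hσ).eventuallyEq_of_mem
      (hU.mem_nhds hx))).congr_deriv ?_
  rw [deriv_eqOn_of_eqOn_kerL0Fun hU hU0 hσ hx]
  field_simp
  ring

theorem tendsto_radialMoment_nhdsGT_zero {r : ℝ} (hr : 0 < r)
    (hσ : EqOn σ (kerL0Fun a b c 0) (Ioo 0 r)) :
    Tendsto (radialMoment σ) (𝓝[>] 0) (𝓝 0) := by
  have hcont : Continuous fun x : ℝ =>
      (2 * a + 3 * b) * (x : ℂ) + 2 * b * ((x * Real.log x : ℝ) : ℂ) :=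
    (Complex.continuous_ofReal.const_mul _).add
      ((Complex.continuous_ofReal.comp Real.continuous_mul_log).const_mul _)
  have hlim := (hcont.tendsto 0).mono_left (nhdsWithin_le_nhds (s := Ioi 0))
  simp only [Complex.ofReal_zero, mul_zero, zero_mul, add_zero] at hlim
  refine hlim.congr' ?_
  filter_upwards [Ioo_mem_nhdsGT hr] with x hx
  simp [radialMoment_eqOn_of_eqOn_kerL0Fun isOpen_Ioo Ioo_subset_Ioi_self hσ hx]

theorem tendsto_radialMoment_atTop {r : ℝ} (hr : 0 ≤ r)
    (hσ : EqOn σ (kerL0Fun 0 0 c d) (Ioi r)) : Tendsto (radialMoment σ) atTop (𝓝 0) := by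
  have hlim : Tendsto (fun x : ℝ => -d * (x : ℂ)⁻¹) atTop (𝓝 (-d * 0)) :=
    (tendsto_inv₀_cobounded.comp (RCLike.tendsto_ofReal_atTop_cobounded ℂ)).const_mul (-d)
  rw [mul_zero] at hlim
  refine hlim.congr' ?_
  filter_upwards [Ioi_mem_atTop r] with x hx
  simp [div_eq_mul_inv, radialMoment_eqOn_of_eqOn_kerL0Fun isOpen_Ioi (Ioi_subset_Ioi hr) hσ hx]

end Kernel

/-- The boundary term `g′·conj(r·σ″)` obtained on integrating `⟨g,σ⟩₀` by parts. -/
def boundaryTerm (G : Lambda0) (σ : ℝ → ℂ) (x : ℝ) : ℂ := G.f' x * conj (radialMoment σ x)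

namespace Lambda0

variable (F G S : Lambda0) {u v : ℝ}

theorem deriv_eqOn : EqOn (deriv F.f) F.f' (Ioi 0) := fun x hx => (F.hasDeriv x hx).deriv

theorem continuousOn_f : ContinuousOn F.f (Ioi 0) :=
  fun x hx => (F.hasDeriv x hx).continuousAt.continuousWithinAt

theorem ae_hasDerivAt_f' (hu : 0 < u) (huv : u ≤ v) :
    ∀ᵐ x, x ∈ Ioo u v → HasDerivAt F.f' (F.f'' x) x :=
  ae_hasDerivAt_of_eq_add_integral huv (F.intervalIntegrable_f'' hu huv) (F.locAC u v hu huv).2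

theorem ae_radialMoment_eq (hu : 0 < u) (huv : u ≤ v) :
    ∀ᵐ x, x ∈ Ioo u v → radialMoment F.f x = x * F.f'' x := by
  filter_upwards [F.ae_hasDerivAt_f' hu huv] with x hF hx
  have hev : deriv F.f =ᶠ[𝓝 x] F.f' :=
    F.deriv_eqOn.eventuallyEq_of_mem (Ioi_mem_nhds (hu.trans hx.1))
  rw [radialMoment, hev.deriv_eq, (hF hx).deriv]

theorem intervalIntegrable_f' (hu : 0 < u) (huv : u ≤ v) : IntervalIntegrable F.f' volume u v :=
  (F.contDeriv.mono ((Icc_subset_Ioi_iff huv).2 hu)).intervalIntegrable_of_Icc huv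

theorem absolutelyContinuousOnInterval_f (hu : 0 < u) (huv : u ≤ v) :
    AbsolutelyContinuousOnInterval F.f u v :=
  absolutelyContinuousOnInterval_of_hasDerivAt huv
    (F.continuousOn_f.mono ((Icc_subset_Ioi_iff huv).2 hu))
    (fun x hx => F.hasDeriv x (hu.trans hx.1)) (F.intervalIntegrable_f' hu huv)

theorem absolutelyContinuousOnInterval_f' (hu : 0 < u) (huv : u ≤ v) :
    AbsolutelyContinuousOnInterval F.f' u v :=
  absolutelyContinuousOnInterval_of_eq_add_integral (F.intervalIntegrable_f'' hu huv) fun x hx =>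
    (F.locAC u v hu huv).2 x (by rwa [uIcc_of_le huv] at hx)

theorem intervalIntegrable_innerDensity (hu : 0 ≤ u) (huv : u ≤ v) :
    IntervalIntegrable (innerDensity F G) volume u v :=
  (intervalIntegrable_iff_integrableOn_Ioc_of_le huv).2
    ((integrableOn_innerDensity F G).mono_set (Ioc_subset_Ioi_self.trans (Ioi_subset_Ioi hu)))

section Piece

variable {a b c d : ℂ}

theorem hasDerivAt_radialMoment (hu : 0 ≤ u) (hS : EqOn S.f (kerL0Fun a b c d) (Ioo u v)) {x : ℝ}
    (hx : x ∈ Ioo u v) : HasDerivAt (radialMoment S.f) (S.f' x / x + 4 * b) x := by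
  rw [← S.deriv_eqOn (hu.trans_lt hx.1)]
  exact hasDerivAt_radialMoment_of_eqOn_kerL0Fun isOpen_Ioo
    (Ioo_subset_Ioi_self.trans (Ioi_subset_Ioi hu)) hS hx

theorem absolutelyContinuousOnInterval_conj_radialMoment (hu : 0 < u) (huv : u ≤ v)
    (hcont : ContinuousOn (radialMoment S.f) (Icc u v))
    (hS : EqOn S.f (kerL0Fun a b c d) (Ioo u v)) :
    AbsolutelyContinuousOnInterval (fun x => conj (radialMoment S.f x)) u v := by
  have hpos : Icc u v ⊆ Ioi 0 := (Icc_subset_Ioi_iff huv).2 hu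
  have hint : IntervalIntegrable (fun x => S.f' x / x + 4 * b) volume u v :=
    (((S.contDeriv.mono hpos).div Complex.continuous_ofReal.continuousOn fun x hx =>
      Complex.ofReal_ne_zero.2 (hpos hx).ne').add continuousOn_const).intervalIntegrable_of_Icc huv
  exact absolutelyContinuousOnInterval_of_dist_le
    (absolutelyContinuousOnInterval_of_hasDerivAt huv hcont
      (fun x hx => S.hasDerivAt_radialMoment hu.le hS hx) hint)
    fun x _ y _ => (Complex.dist_conj_conj _ _).le

theorem ae_hasDerivAt_boundaryTerm_sub (hu : 0 < u) (huv : u ≤ v)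
    (hS : EqOn S.f (kerL0Fun a b c d) (Ioo u v)) :
    ∀ᵐ x, x ∈ Ioo u v →
      HasDerivAt (fun y => boundaryTerm G S.f y - 4 * conj b * G.f y) (innerDensity G S x) x := by
  filter_upwards [G.ae_hasDerivAt_f' hu huv, S.ae_radialMoment_eq hu huv] with x hG hmoment hx
  have hx0 : 0 < x := hu.trans hx.1
  refine (((hG hx).mul (S.hasDerivAt_radialMoment hu.le hS hx).star).sub
    ((G.hasDeriv x hx0).const_mul (4 * conj b))).congr_deriv ?_
  have hconj4 : conj (4 : ℂ) = 4 := map_ofNat _ 4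
  simp only [Complex.star_def, hmoment hx, innerDensity, map_add, map_mul, map_div₀,
    Complex.conj_ofReal, hconj4]
  ring

theorem integral_innerDensity_eq_sub (hu : 0 < u) (huv : u ≤ v)
    (hcont : ContinuousOn (radialMoment S.f) (Icc u v))
    (hS : EqOn S.f (kerL0Fun a b c d) (Ioo u v)) :
    ∫ x in u..v, innerDensity G S x =
      (boundaryTerm G S.f v - 4 * conj b * G.f v) -
        (boundaryTerm G S.f u - 4 * conj b * G.f u) :=
  integral_eq_sub_of_absolutelyContinuousOnInterval huv
    (((G.absolutelyContinuousOnInterval_f' hu huv).fun_smul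
      (S.absolutelyContinuousOnInterval_conj_radialMoment hu huv hcont hS)).fun_sub
      ((G.absolutelyContinuousOnInterval_f hu huv).const_smul (4 * conj b)))
    (G.intervalIntegrable_innerDensity S hu.le huv) (G.ae_hasDerivAt_boundaryTerm_sub S hu huv hS)

end Piece

/-- The weight `1/r` of `|f′|²` in the energy is not integrable at the ends of `(0,∞)`, so `f′`
cannot stay away from `0` there. -/
theorem frequently_norm_f'_le_one {l : Filter ℝ} [l.NeBot] [TendstoIxxClass Icc l l]
    (hl : Ioi 0 ∈ l) (hlog : Tendsto (fun x => ‖Real.log x‖) l atTop) :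
    ∃ᶠ x in l, ‖F.f' x‖ ≤ 1 := by
  intro hlarge
  refine not_integrableOn_of_tendsto_norm_atTop_of_deriv_isBigO_filter l hl ?_ hlog ?_ F.energyFin
  · filter_upwards [hl] with x hx using Real.differentiableAt_log (ne_of_gt hx)
  · refine Asymptotics.IsBigO.of_bound 1 ?_
    filter_upwards [hl, hlarge] with x hx hFx
    rw [mem_Ioi] at hx
    rw [Real.deriv_log, Real.norm_of_nonneg (by positivity), Real.norm_of_nonneg (by positivity),
      one_mul]
    calc x⁻¹ = 1 / x * 1 := by rw [one_div, mul_one]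
      _ ≤ 1 / x * ‖F.f' x‖ ^ 2 := by gcongr; exact one_le_pow₀ (not_le.1 hFx).le
      _ ≤ x * ‖F.f'' x‖ ^ 2 + 1 / x * ‖F.f' x‖ ^ 2 := le_add_of_nonneg_left (by positivity)

theorem frequently_norm_f'_le_one_nhdsGT_zero : ∃ᶠ x in 𝓝[>] 0, ‖F.f' x‖ ≤ 1 :=
  F.frequently_norm_f'_le_one self_mem_nhdsWithin
    (tendsto_abs_atBot_atTop.comp Real.tendsto_log_nhdsGT_zero)

theorem frequently_norm_f'_le_one_atTop : ∃ᶠ x in atTop, ‖F.f' x‖ ≤ 1 :=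
  F.frequently_norm_f'_le_one (Ioi_mem_atTop 0)
    (tendsto_abs_atTop_atTop.comp Real.tendsto_log_atTop)

theorem eq_zero_of_tendsto_boundaryTerm {l : Filter ℝ} {σ : ℝ → ℂ} {L : ℂ}
    (hfreq : ∃ᶠ x in l, ‖F.f' x‖ ≤ 1) (hmoment : Tendsto (radialMoment σ) l (𝓝 0))
    (hL : Tendsto (boundaryTerm F σ) l (𝓝 L)) : L = 0 :=
  eq_zero_of_tendsto_mul_of_frequently_norm_le hL
    (by simpa [Function.comp_def] using (Complex.continuous_conj.tendsto 0).comp hmoment) hfreq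

end Lambda0

section Orthogonality

variable {n : ℕ} {r : ℕ → ℝ} {G S : Lambda0}

theorem NonSingularBLS.exists_eqOn_kerL0Fun {r₁ : ℝ} {η : ℝ → ℂ} (hη : NonSingularBLS r₁ η) :
    ∃ a c, EqOn η (kerL0Fun a 0 c 0) (Ioo 0 r₁) := by
  obtain ⟨a, c, hη⟩ := hη
  exact ⟨a, c, fun x hx => by simp [hη x hx, kerL0Fun]⟩

namespace IsBLSpline

variable {η : ℝ → ℂ}

theorem exists_eqOn_kerL0Fun_left (hη : IsBLSpline n r η) :
    ∃ a b c, EqOn η (kerL0Fun a b c 0) (Ioo 0 (r 1)) := by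
  obtain ⟨a, b, c, hη⟩ := hη.left
  exact ⟨a, b, c, fun x hx => by simp [hη x hx, kerL0Fun]⟩

theorem exists_eqOn_kerL0Fun_right (hη : IsBLSpline n r η) :
    ∃ c d, EqOn η (kerL0Fun 0 0 c d) (Ioi (r n)) := by
  obtain ⟨c, d, hη⟩ := hη.right
  exact ⟨c, d, fun x hx => by simp [hη x hx, kerL0Fun]⟩

theorem exists_eqOn_kerL0Fun_left_and_tendsto {g : ℝ → ℂ} (hη : IsBLSpline n r η)
    (hg : Tendsto g (𝓝[>] 0) (𝓝 0) ∨ NonSingularBLS (r 1) η) :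
    ∃ a b c, EqOn η (kerL0Fun a b c 0) (Ioo 0 (r 1)) ∧
      Tendsto (fun x => 4 * conj b * g x) (𝓝[>] 0) (𝓝 0) := by
  rcases hg with hg | hη
  · obtain ⟨a, b, c, hη⟩ := hη.exists_eqOn_kerL0Fun_left
    exact ⟨a, b, c, hη, by simpa using hg.const_mul (4 * conj b)⟩
  · obtain ⟨a, c, hη⟩ := hη.exists_eqOn_kerL0Fun
    exact ⟨a, 0, c, hη, by simp⟩

end IsBLSpline

theorem integral_innerDensity_from_zero {r₁ : ℝ} {a b c : ℂ} (hr₁ : 0 < r₁)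
    (hcont : ContinuousOn (radialMoment S.f) (Ioi 0))
    (hS : EqOn S.f (kerL0Fun a b c 0) (Ioo 0 r₁))
    (hlim : Tendsto (fun x => 4 * conj b * G.f x) (𝓝[>] 0) (𝓝 0)) (hG : G.f r₁ = 0) :
    ∫ x in 0..r₁, innerDensity G S x = boundaryTerm G S.f r₁ := by
  set I := ∫ x in 0..r₁, innerDensity G S x
  have hint : Tendsto (fun u => ∫ x in u..r₁, innerDensity G S x) (𝓝[>] 0) (𝓝 I) := by
    have hprim := intervalIntegral.continuousOn_primitive_interval_left
      ((intervalIntegrable_iff').1 (G.intervalIntegrable_innerDensity S le_rfl hr₁.le))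
    rw [uIcc_of_le hr₁.le] at hprim
    exact (hprim 0 (left_mem_Icc.2 hr₁.le)).mono_left (nhdsWithin_le_of_mem (Icc_mem_nhdsGT hr₁))
  have hboundary : Tendsto (boundaryTerm G S.f) (𝓝[>] 0) (𝓝 (boundaryTerm G S.f r₁ - I)) := by
    have hsum := (hlim.const_add (boundaryTerm G S.f r₁)).sub hint
    rw [add_zero] at hsum
    refine hsum.congr' ?_
    filter_upwards [Ioo_mem_nhdsGT hr₁] with u hu
    rw [G.integral_innerDensity_eq_sub S hu.1 hu.2.le
      (hcont.mono ((Icc_subset_Ioi_iff hu.2.le).2 hu.1))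
      (hS.mono (Ioo_subset_Ioo_left hu.1.le)), hG]
    ring
  exact (sub_eq_zero.1 (G.eq_zero_of_tendsto_boundaryTerm G.frequently_norm_f'_le_one_nhdsGT_zero
    (tendsto_radialMoment_nhdsGT_zero hr₁ hS) hboundary)).symm

theorem integral_Ioi_innerDensity {r₀ : ℝ} {c d : ℂ} (hr₀ : 0 < r₀)
    (hcont : ContinuousOn (radialMoment S.f) (Ioi 0))
    (hS : EqOn S.f (kerL0Fun 0 0 c d) (Ioi r₀)) :
    ∫ x in Ioi r₀, innerDensity G S x = -boundaryTerm G S.f r₀ := by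
  set I := ∫ x in Ioi r₀, innerDensity G S x
  have hint : Tendsto (fun v => ∫ x in r₀..v, innerDensity G S x) atTop (𝓝 I) :=
    intervalIntegral_tendsto_integral_Ioi r₀
      ((integrableOn_innerDensity G S).mono_set (Ioi_subset_Ioi hr₀.le)) tendsto_id
  have hboundary : Tendsto (boundaryTerm G S.f) atTop (𝓝 (I + boundaryTerm G S.f r₀)) := by
    refine (hint.add_const (boundaryTerm G S.f r₀)).congr' ?_
    filter_upwards [Ioi_mem_atTop r₀] with v hv
    rw [G.integral_innerDensity_eq_sub S hr₀ (le_of_lt hv)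
      (hcont.mono ((Icc_subset_Ioi_iff (le_of_lt hv)).2 hr₀)) (hS.mono Ioo_subset_Ioi_self)]
    simp
  exact eq_neg_of_add_eq_zero_left (G.eq_zero_of_tendsto_boundaryTerm
    G.frequently_norm_f'_le_one_atTop (tendsto_radialMoment_atTop hr₀.le hS) hboundary)

theorem integral_innerDensity_between_knots (hS : IsBLSpline n r S.f) (hpos : 0 < r 1)
    (hmono : StrictMonoOn r (Icc 1 n)) (hG : ∀ j ∈ Icc 1 n, G.f (r j) = 0) {j : ℕ} (hj : 1 ≤ j)
    (hjn : j ≤ n) :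
    ∫ x in r 1..r j, innerDensity G S x =
      boundaryTerm G S.f (r j) - boundaryTerm G S.f (r 1) := by
  induction j, hj using Nat.le_induction with
  | base => simp
  | succ j hj ih =>
    have hjmem : j ∈ Icc 1 n := ⟨hj, Nat.le_of_succ_le hjn⟩
    have hsuccmem : j + 1 ∈ Icc 1 n := ⟨Nat.le_add_left 1 j, hjn⟩
    have hle : r 1 ≤ r j := hmono.monotoneOn ⟨le_rfl, hj.trans hjmem.2⟩ hjmem hj
    have hrj : 0 < r j := hpos.trans_le hle
    have hlt : r j < r (j + 1) := hmono hjmem hsuccmem j.lt_succ_self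
    obtain ⟨a, b, c, d, hpiece⟩ := hS.pieces j hj hjn
    have hstep := G.integral_innerDensity_eq_sub S hrj hlt.le
      ((continuousOn_radialMoment hS.smooth).mono ((Icc_subset_Ioi_iff hlt.le).2 hrj)) hpiece
    rw [hG j hjmem, hG (j + 1) hsuccmem] at hstep
    rw [← intervalIntegral.integral_add_adjacent_intervals
      (G.intervalIntegrable_innerDensity S hpos.le hle)
      (G.intervalIntegrable_innerDensity S hrj.le hlt.le), ih hjmem.2, hstep]
    ring

theorem IsBLSpline.innerBL_eq_zero (hS : IsBLSpline n r S.f) (hn : 1 ≤ n) (hpos : 0 < r 1)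
    (hmono : StrictMonoOn r (Icc 1 n)) (hG : ∀ j ∈ Icc 1 n, G.f (r j) = 0)
    (hzero : Tendsto G.f (𝓝[>] 0) (𝓝 0) ∨ NonSingularBLS (r 1) S.f) : innerBL G S = 0 := by
  have hcont := continuousOn_radialMoment hS.smooth
  obtain ⟨a, b, c, hleft, hlim⟩ := hS.exists_eqOn_kerL0Fun_left_and_tendsto hzero
  obtain ⟨c', d', hright⟩ := hS.exists_eqOn_kerL0Fun_right
  have hle : r 1 ≤ r n := hmono.monotoneOn (left_mem_Icc.2 hn) (right_mem_Icc.2 hn) hn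
  have hposn : 0 < r n := hpos.trans_le hle
  have hint := integrableOn_innerDensity G S
  calc innerBL G S
      = (∫ x in 0..r n, innerDensity G S x) + ∫ x in Ioi (r n), innerDensity G S x :=
        (intervalIntegral.integral_interval_add_Ioi hint
          (hint.mono_set (Ioi_subset_Ioi hposn.le))).symm
    _ = (∫ x in 0..r 1, innerDensity G S x) + (∫ x in r 1..r n, innerDensity G S x) +
          ∫ x in Ioi (r n), innerDensity G S x := by
        rw [intervalIntegral.integral_add_adjacent_intervals
          (G.intervalIntegrable_innerDensity S le_rfl hpos.le)
          (G.intervalIntegrable_innerDensity S hpos.le hle)]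
    _ = boundaryTerm G S.f (r 1) + (boundaryTerm G S.f (r n) - boundaryTerm G S.f (r 1)) +
          -boundaryTerm G S.f (r n) := by
        rw [integral_innerDensity_from_zero hpos hcont hleft hlim (hG 1 (left_mem_Icc.2 hn)),
          integral_innerDensity_between_knots hS hpos hmono hG hn le_rfl,
          integral_Ioi_innerDensity hposn hcont hright]
    _ = 0 := by ring

end Orthogonality

/-- first integral relation `‖f‖₀² = ‖σ‖₀² + ‖f − σ‖₀²` for a Beppo Levi
`L₀`-spline `σ` and `f ∈ Λ₀` agreeing with `σ` at the knots, provided either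
`lim_{r→0⁺}(f(r) − σ(r)) = 0` or `σ` is non-singular. -/
theorem stmt5 (n : ℕ) (r : ℕ → ℝ) (hn : 1 ≤ n) (hpos : 0 < r 1)
    (hmono : ∀ j, 1 ≤ j → j < n → r j < r (j + 1))
    (S F : Lambda0) (hS : IsBLSpline n r S.f)
    (hinterp : ∀ j, 1 ≤ j → j ≤ n → F.f (r j) = S.f (r j))
    (hextra : Filter.Tendsto (fun x => F.f x - S.f x) (nhdsWithin 0 (Set.Ioi 0)) (nhds 0) ∨
      NonSingularBLS (r 1) S.f) :
    energySq F.f' F.f'' =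
      energySq S.f' S.f'' +
        energySq (fun x => F.f' x - S.f' x) (fun x => F.f'' x - S.f'' x) := by
  have hknots : StrictMonoOn r (Icc 1 n) :=
    strictMonoOn_of_lt_add_one ordConnected_Icc fun j _ hj hj' => hmono j hj.1 hj'.2
  have horth : innerBL (F - S) S = 0 :=
    hS.innerBL_eq_zero hn hpos hknots (fun j hj => sub_eq_zero.2 (hinterp j hj.1 hj.2)) hextra
  have hpol := energySq_eq_add_energySq_sub_add_innerBL F S
  rwa [horth, Complex.zero_re, mul_zero, add_zero] at hpol
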